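/- arXiv:2301.08056 — 2 statements merged into one kernel-verified Lean document; each statement's English description precedes it below -/
import Mathlib

section
/- Let p : S^{d-1} → (0,∞) be measurable with 0 < ∫_{S^{d-1}} p dσ_{d-1} < ∞. For x ∈ S^{d-1} and t ∈ (0, ‖p‖_∞) set V(x,t) = {v ∈ S_x^{d-2} : λ₁(L(x,v,t)) > 0}. Then for σ_{d-1}-almost all x ∈ S^{d-1} one has (1/p(x)) · λ₁({t ∈ (0, p(x)) : μ_x(V(x,t)) = ω_{d-2}}) = 1; that is, for almost every level t ∈ (0,p(x)) the set of directions v whose geodesic level set has positive Lebesgue measure has full μ_x-measure. -/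
/-!
The statement is reduced to null sets. Fix a level `t`, and call `x` *bad* if `p x > t` but
`{p > t}` is null along the great circles through `x` for a non-null set of directions. It suffices
that the bad points form a null set for every rational `t`: a level `t < p x` is then handled by a
rational `q` in `(t, p x)`, because `V(x, q) ⊆ V(x, t)`. The set of levels in the theorem is thus
all of `(0, p x)` for almost every `x`.

On a hemisphere `{± x i > 0}`, central projection to the hyperplane `{± x i = 1}`, a copy of
`ℝ^(d-1)`, turns great circles into straight lines. For a measurable `U ⊆ ℝ^(d-1)` and any
direction `w`, the points of `U` whose `w`-line meets `U` in a null set form a null set, by Fubini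
and translation invariance (`line_pos`). So for almost every `u ∈ U`, almost every `w` gives a line
meeting `U` in positive length.

Transporting this back to the sphere only requires preserving null sets:
* along a single line or circle, the change of parameter is differentiable
  (`line_null_of_lvl_null`);
* the exceptional directions `w` form a null cone in `ℝ^(d-1)`, so their traces on the hyperplanes
  `{± w j = 1}` are null (`cone_slice`);
* charts `ℝ^k → S^k` are `C¹`, hence send Lebesgue-null sets to `μH[k]`-null sets
  (`chart_image_null`), with `k = d - 2` for directions and `k = d - 1` for base points.

Finally `omegaSub d` is the measure of the whole subsphere (`hausdorff_subsph`).
-/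


open MeasureTheory Real ProbabilityTheory
open scoped RealInnerProductSpace ENNReal NNReal

noncomputable section

/-- Euclidean space `ℝ^d`. -/
abbrev E (d : ℕ) : Type := EuclideanSpace ℝ (Fin d)

/-- The unit sphere `S^{d-1} ⊆ ℝ^d`. -/
def sph (d : ℕ) : Set (E d) := Metric.sphere 0 1

/-- The great subsphere `S_x^{d-2}` with pole `x`. -/
def subsph (d : ℕ) (x : E d) : Set (E d) := {v | v ∈ sph d ∧ ⟪v, x⟫ = 0}

/-- The great circle (geodesic) `γ_{(x,v)}(θ) = cos θ • x + sin θ • v`. -/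
def geo {d : ℕ} (x v : E d) (θ : ℝ) : E d := Real.cos θ • x + Real.sin θ • v

/-- The canonical volume measure `σ_{d-1}` on the sphere: the `(d-1)`-dimensional
Hausdorff measure restricted to `S^{d-1}`. -/
def sphMeasure (d : ℕ) : Measure (E d) := (μH[(d:ℝ) - 1]).restrict (sph d)

/-- `ω_{d-2}`, the total volume of a `(d-2)`-dimensional unit sphere. -/
def omegaSub (d : ℕ) : ℝ≥0∞ :=
  μH[(d:ℝ) - 2] (Metric.sphere (0 : EuclideanSpace ℝ (Fin (d - 1))) 1)

/-- The geodesic level set `L(x,v,t) = {θ ∈ [0,2π) : p(γ_{(x,v)}(θ)) > t}`. -/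
def lvl {d : ℕ} (p : E d → ℝ) (x v : E d) (t : ℝ) : Set ℝ :=
  {θ | θ ∈ Set.Ico 0 (2 * π) ∧ t < p (geo x v θ)}

/-- The map `T_θ(x,v) = (cos θ x + sin θ v, sin θ x − cos θ v)`. -/
def Tmap {d : ℕ} (θ : ℝ) (x v : E d) : E d × E d :=
  (Real.cos θ • x + Real.sin θ • v, Real.sin θ • x - Real.cos θ • v)
/-- `V(x,t)`: the set of directions `v ∈ S_x^{d-2}` whose geodesic level set has positive
one-dimensional Lebesgue measure. -/
def Vset {d : ℕ} (p : E d → ℝ) (x : E d) (t : ℝ) : Set (E d) :=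
  {v | v ∈ subsph d x ∧ 0 < volume (lvl p x v t)}

/-! ### Radial projection and affine charts -/

/-- Radial projection onto the unit sphere (with value `0` at `0`). -/
def nrm {d : ℕ} (z : E d) : E d := ‖z‖⁻¹ • z

/-- The vector of `ℝ^{n+1}` with `i`-th coordinate `ε` and remaining coordinates `u`. -/
def ins {n : ℕ} (i : Fin (n + 1)) (ε : ℝ) (u : Fin n → ℝ) : Fin (n + 1) → ℝ :=
  i.insertNth ε u

/-- The two signs `1` and `-1`, as real numbers. -/
def sg (b : Bool) : ℝ := if b then 1 else -1

lemma sg_ne (b : Bool) : sg b ≠ 0 := by cases b <;> simp [sg]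

@[simp] lemma ins_same {n : ℕ} (i : Fin (n + 1)) (ε : ℝ) (u : Fin n → ℝ) :
    ins i ε u i = ε := by simp [ins]

@[simp] lemma ins_succAbove {n : ℕ} (i : Fin (n + 1)) (ε : ℝ) (u : Fin n → ℝ) (j : Fin n) :
    ins i ε u (i.succAbove j) = u j := by simp [ins]

lemma ins_contDiff {n : ℕ} (i : Fin (n + 1)) (ε : ℝ) : ContDiff ℝ 1 (ins i ε) := by
  rw [contDiff_pi]
  intro j
  refine Fin.succAboveCases i ?_ (fun k => ?_) j
  · simpa using contDiff_const
  · simpa using contDiff_apply ℝ ℝ k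

lemma ins_add_smul {n : ℕ} (i : Fin (n + 1)) (ε s : ℝ) (u w : Fin n → ℝ) :
    ins i ε (u + s • w) = ins i ε u + s • ins i 0 w := by
  ext j
  refine Fin.succAboveCases i ?_ (fun k => ?_) j <;> simp

lemma smul_ins {n : ℕ} (i : Fin (n + 1)) (ε s : ℝ) (u : Fin n → ℝ) :
    s • ins i ε u = ins i (s * ε) (s • u) := by
  ext j
  refine Fin.succAboveCases i ?_ (fun k => ?_) j <;> simp

lemma ins_removeNth {n : ℕ} (i : Fin (n + 1)) (z : Fin (n + 1) → ℝ) :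
    ins i (z i) (fun j => z (i.succAbove j)) = z := by
  ext j
  refine Fin.succAboveCases i ?_ (fun k => ?_) j <;> simp

/-- Every nonzero vector is a positive multiple of one with some coordinate equal to `±1`. -/
lemma exists_ins {n : ℕ} (z : Fin (n + 1) → ℝ) (hz : z ≠ 0) :
    ∃ (i : Fin (n + 1)) (b : Bool) (u : Fin n → ℝ) (r : ℝ), 0 < r ∧ z = r • ins i (sg b) u := by
  obtain ⟨i, hi⟩ := Function.ne_iff.1 hz
  have hi : z i ≠ 0 := hi
  have key : ∀ b, |z i| * sg b = z i →
      z = |z i| • ins i (sg b) (|z i|⁻¹ • fun j => z (i.succAbove j)) := by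
    intro b hb
    rw [smul_ins, hb, smul_inv_smul₀ (abs_pos.2 hi).ne', ins_removeNth]
  rcases hi.lt_or_gt with h | h
  · exact ⟨i, false, _, _, abs_pos.2 hi, key false (by simp [sg, abs_of_neg h])⟩
  · exact ⟨i, true, _, _, abs_pos.2 hi, key true (by simp [sg, abs_of_pos h])⟩

lemma nrm_smul_unit {d : ℕ} (r : ℝ) (hr : 0 < r) (z : E d) (hz : ‖z‖ = 1) :
    nrm (r • z) = z := by
  simp [nrm, norm_smul, hz, abs_of_pos hr, smul_smul, hr.ne']

lemma nrm_smul {d : ℕ} (r : ℝ) (hr : 0 < r) (z : E d) : nrm (r • z) = nrm z := by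
  simp only [nrm, norm_smul, Real.norm_eq_abs, abs_of_pos hr, smul_smul, mul_inv]
  congr 1
  field_simp

/-! ### Null sets: lines, cones and charts -/

/-- Almost every point `u` of a measurable set `U` is such that almost every line through `u`
meets `U` in positive length. For a fixed direction `w`, the set of `u ∈ U` whose `w`-line meets `U`
in a null set itself meets every `w`-line in a null set, hence is null. -/
lemma line_pos {n : ℕ} (U : Set (Fin n → ℝ)) (hU : MeasurableSet U) :
    ∀ᵐ u : Fin n → ℝ, u ∈ U → ∀ᵐ w : Fin n → ℝ, volume {s : ℝ | u + s • w ∈ U} ≠ 0 := by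
  have hS : MeasurableSet {q : ((Fin n → ℝ) × (Fin n → ℝ)) × ℝ | q.1.2 + q.2 • q.1.1 ∈ U} := by
    have : Measurable fun q : ((Fin n → ℝ) × (Fin n → ℝ)) × ℝ => q.1.2 + q.2 • q.1.1 := by
      fun_prop
    exact this hU
  have hh : Measurable fun q : (Fin n → ℝ) × (Fin n → ℝ) =>
      volume {s : ℝ | q.2 + s • q.1 ∈ U} := measurable_measure_prodMk_left hS
  have hB : MeasurableSet {q : (Fin n → ℝ) × (Fin n → ℝ) |
      q.2 ∈ U → volume {s : ℝ | q.2 + s • q.1 ∈ U} ≠ 0} := by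
    have h1 : MeasurableSet {q : (Fin n → ℝ) × (Fin n → ℝ) | q.2 ∈ U} := measurable_snd hU
    have h2 : MeasurableSet {q : (Fin n → ℝ) × (Fin n → ℝ) |
        volume {s : ℝ | q.2 + s • q.1 ∈ U} ≠ 0} := hh (measurableSet_singleton 0).compl
    exact h1.imp h2
  have hw : ∀ w : Fin n → ℝ, ∀ᵐ u : Fin n → ℝ,
      u ∈ U → volume {s : ℝ | u + s • w ∈ U} ≠ 0 := by
    intro w
    have hG : MeasurableSet {u : Fin n → ℝ | u ∈ U → volume {s : ℝ | u + s • w ∈ U} ≠ 0} :=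
      (show Measurable fun u : Fin n → ℝ => (w, u) by fun_prop) hB
    have h1 : ∀ u : Fin n → ℝ, ∀ᵐ s : ℝ,
        (u + s • w ∈ U → volume {s' : ℝ | (u + s • w) + s' • w ∈ U} ≠ 0) := by
      intro u
      have hshift : ∀ s : ℝ, volume {s' : ℝ | (u + s • w) + s' • w ∈ U} =
          volume {s' : ℝ | u + s' • w ∈ U} := by
        intro s
        rw [← measure_preimage_add volume s {s' : ℝ | u + s' • w ∈ U}]
        congr 1
        ext s'
        simp [add_smul, add_assoc]
      simp only [hshift]
      by_cases h : volume {s' : ℝ | u + s' • w ∈ U} = 0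
      · filter_upwards [measure_eq_zero_iff_ae_notMem.1 h] with s hs hs'
        exact absurd hs' hs
      · exact Filter.Eventually.of_forall fun s _ => h
    have h2 : ∀ᵐ s : ℝ, ∀ᵐ u : Fin n → ℝ,
        (u + s • w ∈ U → volume {s' : ℝ | (u + s • w) + s' • w ∈ U} ≠ 0) := by
      rw [← Measure.ae_ae_comm (μ := (volume : Measure (Fin n → ℝ))) (ν := (volume : Measure ℝ))
        (p := fun u s => (u + s • w ∈ U →
          volume {s' : ℝ | (u + s • w) + s' • w ∈ U} ≠ 0))]
      · exact Filter.Eventually.of_forall h1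
      · exact (show Measurable fun q : (Fin n → ℝ) × ℝ => q.1 + q.2 • w by fun_prop) hG
    obtain ⟨s, hs⟩ := h2.exists
    exact (eventually_add_right_iff volume (s • w)
      (p := fun u => u ∈ U → volume {s' : ℝ | u + s' • w ∈ U} ≠ 0)).1 hs
  have h3 := (Measure.ae_ae_comm (μ := (volume : Measure (Fin n → ℝ)))
    (ν := (volume : Measure (Fin n → ℝ)))
    (p := fun w u => u ∈ U → volume {s : ℝ | u + s • w ∈ U} ≠ 0) hB).1
      (Filter.Eventually.of_forall hw)
  filter_upwards [h3] with u hu huU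
  filter_upwards [hu] with w hw using hw huU

/-- A Lebesgue-null cone has Lebesgue-null trace on each hyperplane `{z | z j = ±1}`: by Fubini
some parallel slice of the cone is null, and it contains a dilate of the trace. -/
lemma cone_slice {k : ℕ} (C : Set (Fin (k + 1) → ℝ)) (hC : volume C = 0)
    (hcone : ∀ r : ℝ, 0 < r → ∀ z ∈ C, r • z ∈ C) (j : Fin (k + 1)) (b : Bool) :
    volume {u : Fin k → ℝ | ins j (sg b) u ∈ C} = 0 := by
  have hmp := (volume_preserving_piFinSuccAbove (fun _ : Fin (k + 1) => ℝ) j).symm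
  have h1 : ∀ᵐ q : ℝ × (Fin k → ℝ), ins j q.1 q.2 ∉ C :=
    hmp.quasiMeasurePreserving.ae (measure_eq_zero_iff_ae_notMem.1 hC)
  have h2 := Measure.ae_ae_of_ae_prod h1
  have h3 : ∃ r : ℝ, 0 < r ∧ ∀ᵐ u : Fin k → ℝ, ins j (r * sg b) u ∉ C := by
    have h4 : ∀ᵐ y : ℝ, ∀ᵐ u : Fin k → ℝ, ins j (y * sg b) u ∉ C := by
      have hq : Measure.QuasiMeasurePreserving (fun y : ℝ => y * sg b) volume volume := by
        refine ⟨by fun_prop, ?_⟩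
        rw [Real.map_volume_mul_right (sg_ne b)]
        exact Measure.smul_absolutelyContinuous
      exact hq.ae h2
    have h5 : (volume : Measure ℝ).restrict (Set.Ioi (0 : ℝ)) ≠ 0 := by
      simp [Measure.restrict_eq_zero]
    have : Filter.NeBot (ae ((volume : Measure ℝ).restrict (Set.Ioi (0 : ℝ)))) := ae_neBot.2 h5
    obtain ⟨r, hr, hr'⟩ := ((ae_restrict_mem (measurableSet_Ioi (a := (0 : ℝ)))).and
      (ae_restrict_of_ae h4)).exists
    exact ⟨r, hr, hr'⟩
  obtain ⟨r, hr, hu⟩ := h3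
  have h6 : volume ((fun u => r • u) '' {u : Fin k → ℝ | ins j (sg b) u ∈ C}) = 0 := by
    refine measure_mono_null ?_ (measure_eq_zero_iff_ae_notMem.2 hu)
    rintro _ ⟨u, hu, rfl⟩
    have := hcone r hr _ hu
    rwa [smul_ins] at this
  rw [Set.image_smul, Measure.addHaar_smul] at h6
  refine (mul_eq_zero.1 h6).resolve_left ?_
  simp [hr.ne']

/-- A `C¹` map from `ℝ^k` sends Lebesgue-null sets to sets of `k`-dimensional Hausdorff measure
zero, being locally Lipschitz. -/
lemma hausdorff_image_null {k d : ℕ} (f : (Fin k → ℝ) → E d) (hf : ContDiff ℝ 1 f)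
    (U : Set (Fin k → ℝ)) (hU : volume U = 0) : μH[(k : ℝ)] (f '' U) = 0 := by
  have hloc : ∀ x : Fin k → ℝ, ∃ K, ∃ t ∈ nhds x, LipschitzOnWith K f t := fun x =>
    hf.contDiffAt.exists_lipschitzOnWith
  choose K t ht hL using hloc
  obtain ⟨s, hs, hcov⟩ := TopologicalSpace.countable_cover_nhds ht
  have hsub : f '' U ⊆ ⋃ x ∈ s, f '' (t x ∩ U) := by
    rintro _ ⟨u, hu, rfl⟩
    have : u ∈ ⋃ x ∈ s, t x := hcov ▸ Set.mem_univ u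
    simp only [Set.mem_iUnion] at this ⊢
    obtain ⟨x, hx, hux⟩ := this
    exact ⟨x, hx, u, ⟨hux, hu⟩, rfl⟩
  refine measure_mono_null hsub ((measure_biUnion_null_iff hs).2 fun x _ => ?_)
  have h1 := ((hL x).mono (Set.inter_subset_left (t := U))).hausdorffMeasure_image_le
    (d := (k : ℝ)) (Nat.cast_nonneg k)
  have h2 : (μH[(k : ℝ)] : Measure (Fin k → ℝ)) = volume := by
    simpa using hausdorffMeasure_pi_real (ι := Fin k)
  rw [h2, measure_mono_null Set.inter_subset_right hU, mul_zero] at h1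
  exact le_antisymm h1 zero_le

/-- `hausdorff_image_null` for the radially projected charts `u ↦ nrm (Λ (u, ±1))` of the sphere. -/
lemma chart_image_null {k d : ℕ} (Λ : (Fin (k + 1) → ℝ) →L[ℝ] E d)
    (hΛ : ∀ z, Λ z = 0 → z = 0) (j : Fin (k + 1)) (b : Bool)
    (U : Set (Fin k → ℝ)) (hU : volume U = 0) :
    μH[(k : ℝ)] ((fun u => nrm (Λ (ins j (sg b) u))) '' U) = 0 := by
  refine hausdorff_image_null _ ?_ U hU
  have h0 : ∀ u, Λ (ins j (sg b) u) ≠ 0 := fun u h => by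
    have := congrFun (hΛ _ h) j
    simp [sg_ne] at this
  have h1 : ContDiff ℝ 1 fun u => Λ (ins j (sg b) u) := Λ.contDiff.comp (ins_contDiff j _)
  exact ((h1.norm ℝ h0).inv fun u => norm_ne_zero_iff.2 (h0 u)).smul h1

/-! ### Great circles and the subsphere -/

lemma exists_polar (a b : ℝ) (h : a ≠ 0 ∨ b ≠ 0) :
    ∃ θ ∈ Set.Ico 0 (2 * π), ∃ r : ℝ, 0 < r ∧ a = r * Real.cos θ ∧ b = r * Real.sin θ := by
  set z : ℂ := ⟨a, b⟩
  have hz : z ≠ 0 := by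
    intro hz
    have h1 := congrArg Complex.re hz
    have h2 := congrArg Complex.im hz
    simp [z] at h1 h2
    tauto
  refine ⟨toIcoMod Real.two_pi_pos 0 z.arg, by simpa using toIcoMod_mem_Ico Real.two_pi_pos 0 z.arg,
    ‖z‖, norm_pos_iff.2 hz, ?_, ?_⟩
  · rw [toIcoMod, zsmul_eq_mul, Real.cos_sub_int_mul_two_pi, Complex.norm_mul_cos_arg]
  · rw [toIcoMod, zsmul_eq_mul, Real.sin_sub_int_mul_two_pi, Complex.norm_mul_sin_arg]

lemma norm_geo {d : ℕ} (x v : E d) (hx : ‖x‖ = 1) (hv : ‖v‖ = 1) (hvx : ⟪v, x⟫ = 0) (θ : ℝ) :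
    ‖geo x v θ‖ = 1 := by
  have h : ‖geo x v θ‖ ^ 2 = 1 := by
    rw [geo, norm_add_sq_real, norm_smul, norm_smul, real_inner_smul_left, real_inner_smul_right,
      real_inner_comm, hvx, hx, hv]
    simp
  nlinarith [norm_nonneg (geo x v θ)]

/-- Central projection from a line to a great circle preserves nullity of level sets: on the
affine line `s ↦ (a - s c) x + s v`, the parameter `s = a sin θ / (cos θ + c sin θ)` is a
differentiable function of the angle `θ`. -/
lemma line_null_of_lvl_null {d : ℕ} (p : E d → ℝ) (x v : E d) (hx : ‖x‖ = 1) (hv : ‖v‖ = 1)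
    (hvx : ⟪v, x⟫ = 0) (t a c : ℝ) (ha : 0 < a) (h : volume (lvl p x v t) = 0) :
    volume {s : ℝ | t < p (nrm ((a - s * c) • x + s • v))} = 0 := by
  set D : Set ℝ := lvl p x v t ∩ {θ | Real.cos θ + c * Real.sin θ ≠ 0}
  have hD : volume D = 0 := measure_mono_null Set.inter_subset_left h
  have hf : DifferentiableOn ℝ
      (fun θ : ℝ => a * Real.sin θ / (Real.cos θ + c * Real.sin θ)) D := by
    intro θ hθ
    exact (DifferentiableAt.div (Real.differentiableAt_sin.const_mul a)
      (Real.differentiableAt_cos.add (Real.differentiableAt_sin.const_mul c)) hθ.2).differentiableWithinAt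
  refine measure_mono_null ?_
    (addHaar_image_eq_zero_of_differentiableOn_of_addHaar_eq_zero volume hf hD)
  intro s hs
  have hne : a - s * c ≠ 0 ∨ s ≠ 0 := by
    by_cases hs0 : s = 0
    · left; simp [hs0, ha.ne']
    · exact Or.inr hs0
  obtain ⟨θ, hθ, r, hr, h1, h2⟩ := exists_polar _ _ hne
  have hpt : (a - s * c) • x + s • v = r • geo x v θ := by
    rw [h1, h2, geo, smul_add, smul_smul, smul_smul]
  have har : a = r * (Real.cos θ + c * Real.sin θ) := by
    linear_combination h1 + c * h2
  have hden : Real.cos θ + c * Real.sin θ ≠ 0 := by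
    intro h0
    rw [h0, mul_zero] at har
    exact ha.ne' har
  rw [Set.mem_ofPred_eq, hpt, nrm_smul_unit r hr _ (norm_geo x v hx hv hvx θ)] at hs
  refine ⟨θ, ⟨⟨hθ, hs⟩, hden⟩, ?_⟩
  simp only
  rw [div_eq_iff hden, h2]
  nth_rw 1 [har]
  ring

/-- The great subsphere orthogonal to a unit vector is isometric to the standard sphere. -/
lemma hausdorff_subsph {n : ℕ} (x : E (n + 1)) (hx : ‖x‖ = 1) (s : ℝ) (hs : 0 ≤ s) :
    μH[s] (subsph (n + 1) x) = μH[s] (Metric.sphere (0 : E n) 1) := by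
  have : Fact (Module.finrank ℝ (E (n + 1)) = n + 1) := ⟨by simp⟩
  have hx0 : x ≠ 0 := by rintro rfl; simp at hx
  let B := OrthonormalBasis.fromOrthogonalSpanSingleton (𝕜 := ℝ) n hx0
  let φ : E n →ₗᵢ[ℝ] E (n + 1) := (ℝ ∙ x)ᗮ.subtypeₗᵢ.comp B.repr.symm.toLinearIsometry
  rw [← φ.isometry.hausdorffMeasure_image (Or.inl hs)]
  congr 1
  ext v
  constructor
  · rintro ⟨hv, hvx⟩
    have hmem : v ∈ (ℝ ∙ x)ᗮ := by
      rw [Submodule.mem_orthogonal_singleton_iff_inner_left]; exact hvx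
    refine ⟨B.repr ⟨v, hmem⟩, ?_, ?_⟩
    · simpa [sph] using hv
    · simp [φ]
  · rintro ⟨y, hy, rfl⟩
    refine ⟨?_, ?_⟩
    · simpa [sph] using hy
    · exact Submodule.mem_orthogonal_singleton_iff_inner_left.1 (B.repr.symm y).2

/-! ### Exceptional directions and base points -/

/-- If almost every line through the chart point `u` meets the chart of `{p > t}` in positive
length, then almost every great circle through the corresponding `x` meets `{p > t}` in positive
length. A bad direction `v ⟂ x` is the normalized projection to `x^⊥` of a bad direction `w` in the
chart, and the bad directions `w` form a null cone. -/
lemma bad_directions_null {m : ℕ} (p : E (m + 2) → ℝ) (t : ℝ) (i : Fin (m + 2)) (b : Bool)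
    (u : Fin (m + 1) → ℝ)
    (hu : ∀ᵐ w : Fin (m + 1) → ℝ, volume {s : ℝ | u + s • w ∈
      {u' | t < p (nrm (WithLp.toLp 2 (ins i (sg b) u')))}} ≠ 0)
    (x : E (m + 2)) (hx : x = nrm (WithLp.toLp 2 (ins i (sg b) u))) :
    μH[(m : ℝ)] {v | v ∈ subsph (m + 2) x ∧ volume (lvl p x v t) = 0} = 0 := by
  set X : E (m + 2) := WithLp.toLp 2 (ins i (sg b) u) with hX
  have hXi : X i = sg b := by simp [hX]
  have hX0 : X ≠ 0 := by
    intro h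
    rw [h] at hXi
    exact sg_ne b (by simpa using hXi.symm)
  have hXn : 0 < ‖X‖ := norm_pos_iff.2 hX0
  have hXx : X = ‖X‖ • x := by rw [hx, nrm, smul_inv_smul₀ hXn.ne']
  have hx1 : ‖x‖ = 1 := by rw [hx, nrm, norm_smul, norm_inv, norm_norm, inv_mul_cancel₀ hXn.ne']
  have hxi : x i ≠ 0 := by
    rw [hx, nrm, PiLp.smul_apply, hXi]
    exact smul_ne_zero (inv_ne_zero hXn.ne') (sg_ne b)
  set C : Set (Fin (m + 1) → ℝ) := {w | volume {s : ℝ |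
    t < p (nrm (WithLp.toLp 2 (ins i (sg b) (u + s • w))))} = 0} with hCdef
  have hC : volume C = 0 := by
    refine measure_eq_zero_iff_ae_notMem.2 ?_
    filter_upwards [hu] with w hw using hw
  have hcone : ∀ r : ℝ, 0 < r → ∀ w ∈ C, r • w ∈ C := by
    intro r hr w hw
    have h1 := Real.volume_preimage_mul_right hr.ne'
      {s : ℝ | t < p (nrm (WithLp.toLp 2 (ins i (sg b) (u + s • w))))}
    rw [show volume _ = 0 from hw, mul_zero] at h1
    simpa [hCdef, smul_smul] using h1
  let W : (Fin (m + 1) → ℝ) →ₗ[ℝ] E (m + 2) :=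
    { toFun := fun w => WithLp.toLp 2 (ins i 0 w)
      map_add' := fun w w' => by
        have := ins_add_smul i 0 1 w w'
        rw [one_smul, one_smul] at this
        rw [this]; rfl
      map_smul' := fun r w => by
        have := smul_ins i 0 r w
        rw [mul_zero] at this
        rw [← this]; rfl }
  let Λ : (Fin (m + 1) → ℝ) →L[ℝ] E (m + 2) := LinearMap.toContinuousLinearMap
    (W - ((innerSL ℝ x).toLinearMap.comp W).smulRight x)
  have hΛ : ∀ w, Λ w = WithLp.toLp 2 (ins i 0 w) - ⟪x, WithLp.toLp 2 (ins i 0 w)⟫ • x := by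
    intro w
    rfl
  have hΛinj : ∀ w, Λ w = 0 → w = 0 := by
    intro w hw
    rw [hΛ, sub_eq_zero] at hw
    have h1 := congrArg (fun z : E (m + 2) => z i) hw
    simp only [ins_same, PiLp.smul_apply, smul_eq_mul] at h1
    have h2 := (mul_eq_zero.1 h1.symm).resolve_right hxi
    rw [h2, zero_smul] at hw
    ext k
    simpa using congrArg (fun z : E (m + 2) => z (i.succAbove k)) hw
  refine measure_mono_null (t := ⋃ (j : Fin (m + 1)) (b' : Bool),
    (fun u' => nrm (Λ (ins j (sg b') u'))) '' {u' | ins j (sg b') u' ∈ C}) ?_ ?_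
  · rintro v ⟨⟨hv, hvx⟩, hnull⟩
    have hv1 : ‖v‖ = 1 := by simpa [sph] using hv
    set c : ℝ := v i / x i with hc
    set w : Fin (m + 1) → ℝ := fun k => (v - c • x) (i.succAbove k) with hw
    have hW : WithLp.toLp 2 (ins i 0 w) = v - c • x := by
      have h0 : (v - c • x) i = 0 := by simp [hc, hxi]
      ext k
      have := congrFun (ins_removeNth i (fun k => (v - c • x) k)) k
      rw [h0] at this
      exact this
    have hΛw : Λ w = v := by
      rw [hΛ, hW, inner_sub_right, real_inner_comm, hvx, inner_smul_right,
        real_inner_self_eq_norm_sq, hx1]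
      simp
    have hwC : w ∈ C := by
      have h1 := line_null_of_lvl_null p x v hx1 hv1 hvx t ‖X‖ c hXn hnull
      have h2 : ∀ s : ℝ, WithLp.toLp 2 (ins i (sg b) (u + s • w)) =
          (‖X‖ - s * c) • x + s • v := by
        intro s
        rw [ins_add_smul, WithLp.toLp_add, WithLp.toLp_smul, hW, ← hX]
        nth_rw 1 [hXx]
        module
      simpa only [hCdef, Set.mem_ofPred_eq, h2] using h1
    have hw0 : w ≠ 0 := by
      intro h
      rw [h, map_zero] at hΛw
      rw [← hΛw, norm_zero] at hv1
      exact zero_ne_one hv1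
    obtain ⟨j, b', u', r, hr, hwr⟩ := exists_ins w hw0
    have hu' : ins j (sg b') u' = r⁻¹ • w := by rw [hwr, inv_smul_smul₀ hr.ne']
    simp only [Set.mem_iUnion]
    refine ⟨j, b', u', ?_, ?_⟩
    · rw [Set.mem_ofPred_eq, hu']
      exact hcone _ (inv_pos.2 hr) _ hwC
    · simp only
      rw [hu', map_smul, hΛw, nrm_smul_unit _ (inv_pos.2 hr) _ hv1]
  · refine measure_iUnion_null fun j => measure_iUnion_null fun b' => ?_
    exact chart_image_null Λ hΛinj j b' _ (cone_slice C hC hcone j b')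

/-- The points of the sphere lying in `{p > t}` but admitting a non-null set of directions along
which `{p > t}` is null form a null set. -/
lemma bad_points_null {m : ℕ} (p : E (m + 2) → ℝ) (hp : Measurable p) (t : ℝ) :
    μH[((m + 1 : ℕ) : ℝ)] {x | x ∈ sph (m + 2) ∧ t < p x ∧
      μH[(m : ℝ)] {v | v ∈ subsph (m + 2) x ∧ volume (lvl p x v t) = 0} ≠ 0} = 0 := by
  let Λ : (Fin (m + 2) → ℝ) →L[ℝ] E (m + 2) :=
    (EuclideanSpace.equiv (Fin (m + 2)) ℝ).symm.toContinuousLinearMap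
  have hΛ : ∀ z, Λ z = WithLp.toLp 2 z := fun z => rfl
  have hΛinj : ∀ z, Λ z = 0 → z = 0 := fun z hz => by simpa [hΛ] using hz
  let U : Fin (m + 2) → Bool → Set (Fin (m + 1) → ℝ) := fun i b =>
    {u | t < p (nrm (WithLp.toLp 2 (ins i (sg b) u)))}
  have hU : ∀ i b, MeasurableSet (U i b) := by
    intro i b
    have h1 : Measurable fun u => nrm (Λ (ins i (sg b) u)) := by
      have h2 : Measurable fun u => Λ (ins i (sg b) u) :=
        (Λ.continuous.comp (ins_contDiff i _).continuous).measurable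
      exact h2.norm.inv.smul h2
    exact measurableSet_lt measurable_const (hp.comp h1)
  refine measure_mono_null (t := ⋃ (i : Fin (m + 2)) (b : Bool),
    (fun u => nrm (Λ (ins i (sg b) u))) '' {u | ¬ (u ∈ U i b →
      ∀ᵐ w : Fin (m + 1) → ℝ, volume {s : ℝ | u + s • w ∈ U i b} ≠ 0)}) ?_ ?_
  · rintro x ⟨hx, htx, hbad⟩
    have hx1 : ‖x‖ = 1 := by simpa [sph] using hx
    have hx0 : WithLp.ofLp x ≠ 0 := by
      intro h
      have : x = 0 := by ext k; exact congrFun h k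
      rw [this, norm_zero] at hx1
      exact zero_ne_one hx1
    obtain ⟨i, b, u, r, hr, hxr⟩ := exists_ins (WithLp.ofLp x) hx0
    have hxu : x = nrm (WithLp.toLp 2 (ins i (sg b) u)) := by
      have h1 : x = r • WithLp.toLp 2 (ins i (sg b) u) := by
        rw [← WithLp.toLp_smul, ← hxr]
      rw [← nrm_smul r hr, ← h1]
      simp [nrm, hx1]
    simp only [Set.mem_iUnion]
    refine ⟨i, b, u, fun h => hbad ?_, hxu.symm⟩
    exact bad_directions_null p t i b u (h (show t < p _ by rwa [← hxu])) x hxu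
  · refine measure_iUnion_null fun i => measure_iUnion_null fun b => ?_
    exact chart_image_null Λ hΛinj i b _ (ae_iff.1 (line_pos (U i b) (hU i b)))

/-- for `σ_{d-1}`-almost all `x`, for (Lebesgue-)almost every level
`t ∈ (0, p(x))` the set `V(x,t)` has full `μ_x`-measure `ω_{d-2}`, i.e.
`(1/p(x)) · λ₁({t ∈ (0,p(x)) : μ_x(V(x,t)) = ω_{d-2}}) = 1`. -/
theorem stmt6 {d : ℕ} (hd : 3 ≤ d) (p : E d → ℝ) (hp : Measurable p)
    (hpos : ∀ y ∈ sph d, 0 < p y)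
    (hZ0 : 0 < ∫⁻ x, ENNReal.ofReal (p x) ∂sphMeasure d)
    (hZtop : ∫⁻ x, ENNReal.ofReal (p x) ∂sphMeasure d < ⊤) :
    ∀ᵐ x ∂sphMeasure d,
      volume {t | t ∈ Set.Ioo 0 (p x) ∧ μH[(d:ℝ) - 2] (Vset p x t) = omegaSub d} =
        ENNReal.ofReal (p x) := by
  obtain ⟨m, rfl⟩ : ∃ m, d = m + 2 := ⟨d - 2, by omega⟩
  have e1 : ((m + 2 : ℕ) : ℝ) - 1 = ((m + 1 : ℕ) : ℝ) := by push_cast; ring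
  have e2 : ((m + 2 : ℕ) : ℝ) - 2 = (m : ℝ) := by push_cast; ring
  have hae : ∀ᵐ x ∂sphMeasure (m + 2), ∀ q : ℚ, (q : ℝ) < p x →
      μH[(m : ℝ)] {v | v ∈ subsph (m + 2) x ∧ volume (lvl p x v q) = 0} = 0 := by
    rw [sphMeasure, e1]
    refine (ae_restrict_iff' (show MeasurableSet (sph (m + 2)) from
      Metric.isClosed_sphere.measurableSet)).2 ?_
    have h1 : ∀ᵐ x ∂(μH[((m + 1 : ℕ) : ℝ)] : Measure (E (m + 2))), ∀ q : ℚ,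
        x ∉ {x | x ∈ sph (m + 2) ∧ (q : ℝ) < p x ∧
          μH[(m : ℝ)] {v | v ∈ subsph (m + 2) x ∧ volume (lvl p x v q) = 0} ≠ 0} :=
      ae_all_iff.2 fun q => measure_eq_zero_iff_ae_notMem.1 (bad_points_null p hp q)
    filter_upwards [h1] with x hx hxs q hq
    by_contra h
    exact hx q ⟨hxs, hq, h⟩
  have hmem : ∀ᵐ x ∂sphMeasure (m + 2), x ∈ sph (m + 2) :=
    ae_restrict_mem (Metric.isClosed_sphere.measurableSet)
  filter_upwards [hae, hmem] with x hx hxs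
  have hx1 : ‖x‖ = 1 := by simpa [sph] using hxs
  have hset : {t | t ∈ Set.Ioo 0 (p x) ∧
      μH[((m + 2 : ℕ) : ℝ) - 2] (Vset p x t) = omegaSub (m + 2)} = Set.Ioo 0 (p x) := by
    ext t
    refine ⟨fun h => h.1, fun h => ⟨h, ?_⟩⟩
    obtain ⟨q, htq, hqp⟩ := exists_rat_btwn h.2
    have hnull : μH[(m : ℝ)] (subsph (m + 2) x \ Vset p x t) = 0 := by
      refine measure_mono_null ?_ (hx q hqp)
      rintro v ⟨hv, hvV⟩
      have h0 : volume (lvl p x v t) = 0 := by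
        by_contra hne
        exact hvV ⟨hv, pos_iff_ne_zero.2 hne⟩
      refine ⟨hv, measure_mono_null ?_ h0⟩
      exact fun θ hθ => ⟨hθ.1, htq.trans hθ.2⟩
    have hsub : Vset p x t ⊆ subsph (m + 2) x := fun v hv => hv.1
    rw [omegaSub, e2]
    refine Eq.trans ?_ (hausdorff_subsph (n := m + 1) x hx1 (m : ℝ) (Nat.cast_nonneg m))
    exact measure_congr (Filter.EventuallyLE.antisymm hsub.eventuallyLE (ae_le_set.2 hnull))
  rw [hset, Real.volume_Ioo, sub_zero]

end
end

section
/- Let p : S^{d-1} → (0,∞) be measurable with Z := ∫_{S^{d-1}} p dσ_{d-1} ∈ (0,∞), and let π be the probability measure on S^{d-1} with density p/Z relative to σ_{d-1}. Define H(x,A) = (1/p(x)) ∫_0^{p(x)} H_t(x,A) dt, where H_t(x,A) = (1/ω_{d-2}) ∫_{S_x^{d-2}} (1/λ₁(L(x,v,t))) ∫_{L(x,v,t)} 1_A(γ_{(x,v)}(θ)) dθ μ_x(dv). Then H is reversible with respect to π: for all Borel sets A, B ⊆ S^{d-1}, ∫_B H(x,A) π(dx) = ∫_A H(x,B) π(dx).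 -/
/-!
Writing out `∫_B H(x,A) π(dx)`, the density `p(x)` cancels the factor `1/p(x)` of the kernel, and
Tonelli turns the integral into `Z⁻¹ ω⁻¹` times the integral over heights `t > 0` and angles
`θ ∈ [0, 2π)` of
`∫ 1_{B ∩ {p > t}}(x) λ₁(L(x,v,t))⁻¹ 1_{A ∩ {p > t}}(γ_{(x,v)}(θ)) M(dx, dv)`,
where `M(dx, dv) = σ(dx) μ_x(dv)` is a measure on orthonormal pairs (`lint_Hker_eq`). It is thus
enough to compare the inner integrals for fixed `t` and `θ`, and this is done by the substitution
`T_θ(x,v) = (cos θ x + sin θ v, sin θ x - cos θ v)`. It exchanges the end points `x` and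
`γ_{(x,v)}(θ)` and reparametrises the great circle by `φ ↦ θ - φ`, so it preserves the measure of
the level set (`volume_lvl_TT`) and swaps the roles of `A` and `B` (`flow_TT`).

The essential point is that `T_θ` preserves `M` (`lint_stief_TT`). The measure `M` is
`O(d)`-invariant because isometries preserve Hausdorff measures, and `T_θ` commutes with `O(d)`.
On each orthonormal pair `y`, the value `T_θ y` is `h y` for a hyperplane reflection `h` depending
on `y`. With `ν` a right-invariant probability measure on `O(d)`,
`∫ F(T_θ y) M(dy) = ∫∫ F(g T_θ y) ν(dg) M(dy) = ∫∫ F(g h y) ν(dg) M(dy) = ∫ F(y) M(dy)`.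

Measurability of `x ↦ ∫ f(x,v) μ_x(dv)` comes from transporting `μ_x` to a fixed base point by the
reflection `swapRefl`, which is explicit and measurable in `x`.
-/

open MeasureTheory Real ProbabilityTheory
open scoped RealInnerProductSpace ENNReal NNReal

noncomputable section

/-- The level-set kernel `H_t` of the ideal geodesic slice sampler. -/
def Hlev {d : ℕ} (p : E d → ℝ) (t : ℝ) (x : E d) (A : Set (E d)) : ℝ≥0∞ :=
  (omegaSub d)⁻¹ *
    ∫⁻ v in subsph d x,
      (volume (lvl p x v t))⁻¹ *
        ∫⁻ θ in lvl p x v t, A.indicator (fun _ => (1 : ℝ≥0∞)) (geo x v θ) ∂volume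
    ∂μH[(d:ℝ) - 2]

/-- The ideal geodesic slice sampling kernel `H(x,A) = (1/p(x)) ∫_0^{p(x)} H_t(x,A) dt`. -/
def Hker {d : ℕ} (p : E d → ℝ) (x : E d) (A : Set (E d)) : ℝ≥0∞ :=
  (ENNReal.ofReal (p x))⁻¹ * ∫⁻ t in Set.Ioo 0 (p x), Hlev p t x A ∂volume

/-- The target distribution `π(dx) = (p(x)/Z) σ_{d-1}(dx)`. -/
def piMeas (d : ℕ) (p : E d → ℝ) : Measure (E d) :=
  (∫⁻ x, ENNReal.ofReal (p x) ∂sphMeasure d)⁻¹ •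
    (sphMeasure d).withDensity fun x => ENNReal.ofReal (p x)

/-! ### The orthogonal group and its right-invariant probability measure -/

/-- The orthogonal group `O(d)`, as the unitary elements of the algebra of operators on `ℝ^d`. -/
abbrev OG (d : ℕ) := unitary (E d →L[ℝ] E d)

instance continuousStar_clm (d : ℕ) : ContinuousStar (E d →L[ℝ] E d) :=
  ⟨(ContinuousLinearMap.adjoint (𝕜 := ℝ) (E := E d) (F := E d)).continuous⟩

lemma OG_coe {d : ℕ} (u : OG d) (x : E d) :
    (u : E d →L[ℝ] E d) x = Unitary.linearIsometryEquiv u x := rfl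

instance compactSpace_OG (d : ℕ) : CompactSpace (OG d) := by
  refine isCompact_iff_compactSpace.mp (Metric.isCompact_of_isClosed_isBounded isClosed_unitary ?_)
  refine Metric.isBounded_closedBall (x := (0 : E d →L[ℝ] E d)) (r := 1) |>.subset ?_
  intro u hu
  rw [mem_closedBall_zero_iff]
  refine ContinuousLinearMap.opNorm_le_bound _ zero_le_one fun x => ?_
  have := OG_coe ⟨u, hu⟩ x
  simp only at this
  rw [this, LinearIsometryEquiv.norm_map, one_mul]

/-- A right-invariant probability measure on `O(d)`: the image of the left Haar probability measure
under inversion. -/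
def nu (d : ℕ) : Measure (OG d) :=
  (Measure.haarMeasure (⊤ : TopologicalSpace.PositiveCompacts (OG d))).inv

instance (d : ℕ) : (nu d).IsMulRightInvariant := by unfold nu; infer_instance

instance (d : ℕ) : IsProbabilityMeasure (nu d) := by
  refine ⟨?_⟩
  rw [nu, Measure.inv_apply, Set.inv_univ]
  exact Measure.haarMeasure_self (K₀ := (⊤ : TopologicalSpace.PositiveCompacts (OG d)))

/-! ### Isometries acting on spheres and great subspheres -/

lemma map_mem_sph {d : ℕ} (g : E d ≃ₗᵢ[ℝ] E d) (x : E d) : g x ∈ sph d ↔ x ∈ sph d := by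
  simp [sph]

lemma map_mem_subsph {d : ℕ} (g : E d ≃ₗᵢ[ℝ] E d) (x v : E d) :
    g v ∈ subsph d (g x) ↔ v ∈ subsph d x := by
  simp only [subsph, Set.mem_ofPred_eq, map_mem_sph, LinearIsometryEquiv.inner_map_map]

lemma lint_subsph_map {d : ℕ} (s : ℝ) (g : E d ≃ₗᵢ[ℝ] E d) (x : E d) (f : E d → ℝ≥0∞) :
    ∫⁻ v in subsph d (g x), f v ∂μH[s] = ∫⁻ v in subsph d x, f (g v) ∂μH[s] := by
  have h := (g.toIsometryEquiv.measurePreserving_hausdorffMeasure s).setLIntegral_comp_preimage_emb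
    g.toIsometryEquiv.toHomeomorph.measurableEmbedding f (subsph d (g x))
  rw [← h]
  have : g.toIsometryEquiv ⁻¹' subsph d (g x) = subsph d x := by
    ext v; exact map_mem_subsph g x v
  rw [this]; rfl

lemma lint_sph_map {d : ℕ} (g : E d ≃ₗᵢ[ℝ] E d) (f : E d → ℝ≥0∞) :
    ∫⁻ x, f (g x) ∂sphMeasure d = ∫⁻ x, f x ∂sphMeasure d := by
  have h := (g.toIsometryEquiv.measurePreserving_hausdorffMeasure
    ((d : ℝ) - 1)).setLIntegral_comp_preimage_emb
    g.toIsometryEquiv.toHomeomorph.measurableEmbedding f (sph d)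
  have : g.toIsometryEquiv ⁻¹' sph d = sph d := by
    ext v; exact map_mem_sph g v
  rw [this] at h
  exact h

lemma isClosed_subsph (d : ℕ) (x : E d) : IsClosed (subsph d x) := by
  apply IsClosed.inter
  · exact Metric.isClosed_sphere
  · exact isClosed_eq (by fun_prop) continuous_const

lemma measurableSet_sph (d : ℕ) : MeasurableSet (sph d) := Metric.isClosed_sphere.measurableSet

lemma measurableSet_subsph (d : ℕ) (x : E d) : MeasurableSet (subsph d x) :=
  (isClosed_subsph d x).measurableSet

/-- The volume of a great subsphere is that of the unit sphere of `ℝ^{d-1}`. -/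
lemma subsph_volume {d : ℕ} (hd : 3 ≤ d) {e : E d} (he : e ∈ sph d) :
    μH[(d : ℝ) - 2] (subsph d e) = omegaSub d := by
  have hn : ‖e‖ = 1 := by simpa [sph] using he
  have he0 : e ≠ 0 := by rintro rfl; simp at hn
  have : Fact (Module.finrank ℝ (E d) = (d - 1) + 1) := ⟨by simp; omega⟩
  let b := OrthonormalBasis.fromOrthogonalSpanSingleton (𝕜 := ℝ) (d - 1) he0
  let J : EuclideanSpace ℝ (Fin (d - 1)) →ₗᵢ[ℝ] E d :=
    (ℝ ∙ e)ᗮ.subtypeₗᵢ.comp b.repr.symm.toLinearIsometry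
  have hd' : (0 : ℝ) ≤ (d : ℝ) - 2 := by
    have : (3 : ℝ) ≤ d := by exact_mod_cast hd
    linarith
  rw [omegaSub, ← J.isometry.hausdorffMeasure_image (Or.inl hd')]
  congr 1
  ext v
  constructor
  · rintro ⟨hv, hve⟩
    have hm : v ∈ (ℝ ∙ e)ᗮ := by
      rw [Submodule.mem_orthogonal_singleton_iff_inner_left]; exact hve
    refine ⟨b.repr ⟨v, hm⟩, ?_, ?_⟩
    · simpa [sph] using hv
    · simp [J]
  · rintro ⟨z, hz, rfl⟩
    refine ⟨?_, ?_⟩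
    · have : ‖z‖ = 1 := by simpa using hz
      simp only [sph, mem_sphere_zero_iff_norm, J.norm_map, this]
    · have : J z ∈ (ℝ ∙ e)ᗮ := by simp [J]
      exact (Submodule.mem_orthogonal_singleton_iff_inner_left).1 this

/-- The hyperplane reflection exchanging the unit vectors `e` and `x` (the identity if `x = e`).
It transports the great subsphere at `e` to the one at `x`, and depends measurably on `x`. -/
def swapRefl {d : ℕ} (e x : E d) : E d ≃ₗᵢ[ℝ] E d := (ℝ ∙ (e - x))ᗮ.reflection

lemma swapRefl_self {d : ℕ} {e x : E d} (he : e ∈ sph d) (hx : x ∈ sph d) :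
    swapRefl e x e = x := by
  apply Submodule.reflection_sub
  simp only [sph, mem_sphere_zero_iff_norm] at he hx
  rw [he, hx]

lemma reflection_formula {d : ℕ} (u v : E d) :
    (ℝ ∙ u)ᗮ.reflection v = v - (2 * (⟪u, v⟫ / ‖u‖ ^ 2)) • u := by
  rw [Submodule.reflection_orthogonal_apply, Submodule.reflection_singleton_apply]
  simp only [RCLike.ofReal_real_eq_id, id_eq, two_smul, mul_smul, neg_sub]

lemma measurable_swapRefl {d : ℕ} (e : E d) :
    Measurable fun q : E d × E d => swapRefl e q.1 q.2 := by
  simp only [swapRefl, reflection_formula]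
  fun_prop

/-! ### The orthogonal group and `T_θ` acting on pairs of vectors -/

/-- The diagonal action of an operator on pairs of vectors. -/
def act {d : ℕ} (u : OG d) (y : E d × E d) : E d × E d :=
  ((u : E d →L[ℝ] E d) y.1, (u : E d →L[ℝ] E d) y.2)


lemma measurable_act {d : ℕ} : Measurable fun q : OG d × (E d × E d) => act q.1 q.2 := by
  have : Continuous fun q : OG d × (E d × E d) => act q.1 q.2 := by
    unfold act
    have h : Continuous fun q : OG d × (E d × E d) => (q.1 : E d →L[ℝ] E d) :=
      continuous_subtype_val.comp continuous_fst
    exact (h.clm_apply (by fun_prop)).prodMk (h.clm_apply (by fun_prop))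
  exact this.measurable

lemma act_mul {d : ℕ} (u w : OG d) (y : E d × E d) : act (u * w) y = act u (act w y) := rfl

/-- `T_θ` acting on pairs of vectors. -/
def TT {d : ℕ} (θ : ℝ) (y : E d × E d) : E d × E d := Tmap θ y.1 y.2

lemma measurable_TT {d : ℕ} (θ : ℝ) : Measurable (TT (d := d) θ) := by
  unfold TT Tmap; fun_prop

lemma TT_act {d : ℕ} (θ : ℝ) (u : OG d) (y : E d × E d) : TT θ (act u y) = act u (TT θ y) := by
  simp [TT, act, Tmap]

/-- On an orthonormal pair, `T_θ` is realised by an element of `O(d)`. -/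
lemma exists_act_eq_TT {d : ℕ} (θ : ℝ) {x v : E d} (hx : x ∈ sph d) (hv : v ∈ subsph d x) :
    ∃ w : OG d, act w (x, v) = TT θ (x, v) := by
  -- The reflection along `sin(θ/2) x - cos(θ/2) v`.
  let u : E d := Real.sin (θ / 2) • x - Real.cos (θ / 2) • v
  refine ⟨Unitary.linearIsometryEquiv.symm (ℝ ∙ u)ᗮ.reflection, ?_⟩
  have hx1 : ⟪x, x⟫ = 1 := by
    rw [real_inner_self_eq_norm_sq]; simp only [sph, mem_sphere_zero_iff_norm] at hx; rw [hx]; simp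
  have hv1 : ⟪v, v⟫ = 1 := by
    have := hv.1
    rw [real_inner_self_eq_norm_sq]; simp only [sph, mem_sphere_zero_iff_norm] at this
    rw [this]; simp
  have hvx : ⟪v, x⟫ = 0 := hv.2
  have hxv : ⟪x, v⟫ = 0 := by rw [real_inner_comm]; exact hvx
  have hu : ‖u‖ ^ 2 = 1 := by
    rw [← real_inner_self_eq_norm_sq]
    simp only [u, inner_sub_left, inner_sub_right, real_inner_smul_left, real_inner_smul_right,
      hx1, hv1, hvx, hxv]
    linarith [Real.sin_sq_add_cos_sq (θ / 2)]
  have hux : ⟪u, x⟫ = Real.sin (θ / 2) := by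
    simp only [u, inner_sub_left, real_inner_smul_left, hx1, hvx]; ring
  have huv : ⟪u, v⟫ = -Real.cos (θ / 2) := by
    simp only [u, inner_sub_left, real_inner_smul_left, hv1, hxv]; ring
  have hc' : Real.cos θ = 2 * Real.cos (θ / 2) ^ 2 - 1 := by
    rw [← Real.cos_two_mul]; congr 1; ring
  have hc : Real.cos θ = 1 - 2 * Real.sin (θ / 2) ^ 2 := by
    have := Real.cos_sq_add_sin_sq (θ / 2)
    linarith [hc']
  have hs : Real.sin θ = 2 * Real.sin (θ / 2) * Real.cos (θ / 2) := by
    rw [← Real.sin_two_mul]; congr 1; ring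
  simp only [act, TT, Tmap, OG_coe, MulEquiv.apply_symm_apply, reflection_formula, hu, hux, huv]
  refine Prod.ext ?_ ?_
  · simp only [u]; rw [hc, hs]; module
  · simp only [u]; rw [hc', hs]; module

/-! ### The invariant measure on orthonormal pairs -/

/-- The measure `σ(dx) μ_x(dv)` on orthonormal pairs, obtained by transporting the
subsphere at the base point `e` to all other points by `swapRefl`. -/
def stief (d : ℕ) (e : E d) : Measure (E d × E d) :=
  ((sphMeasure d).prod ((μH[(d : ℝ) - 2]).restrict (subsph d e))).map
    fun q => (q.1, swapRefl e q.1 q.2)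

section Stiefel

variable {d : ℕ} {e : E d} [IsFiniteMeasure ((μH[(d : ℝ) - 2]).restrict (subsph d e))]

lemma lint_stief_refl {F : E d × E d → ℝ≥0∞} (hF : Measurable F) :
    ∫⁻ y, F y ∂stief d e = ∫⁻ x, (∫⁻ v in subsph d e, F (x, swapRefl e x v) ∂μH[(d : ℝ) - 2])
      ∂sphMeasure d := by
  have h1 : Measurable fun q : E d × E d => (q.1, swapRefl e q.1 q.2) :=
    measurable_fst.prodMk (measurable_swapRefl e)
  rw [stief, lintegral_map hF h1]
  exact lintegral_prod _ (hF.comp h1).aemeasurable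

lemma lint_stief (he : e ∈ sph d) {F : E d × E d → ℝ≥0∞} (hF : Measurable F) :
    ∫⁻ y, F y ∂stief d e = ∫⁻ x, (∫⁻ v in subsph d x, F (x, v) ∂μH[(d : ℝ) - 2])
      ∂sphMeasure d := by
  rw [lint_stief_refl hF]
  refine setLIntegral_congr_fun (measurableSet_sph d) fun x hx => ?_
  have := lint_subsph_map ((d : ℝ) - 2) (swapRefl e x) e fun v => F (x, v)
  rw [swapRefl_self he hx] at this
  exact this.symm

lemma lint_stief_congr (he : e ∈ sph d) {F F' : E d × E d → ℝ≥0∞}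
    (hF : Measurable F) (hF' : Measurable F')
    (h : ∀ x v, x ∈ sph d → v ∈ subsph d x → F (x, v) = F' (x, v)) :
    ∫⁻ y, F y ∂stief d e = ∫⁻ y, F' y ∂stief d e := by
  rw [lint_stief he hF, lint_stief he hF']
  refine setLIntegral_congr_fun (measurableSet_sph d) fun x hx => ?_
  exact setLIntegral_congr_fun (measurableSet_subsph d x) fun v hv => h x v hx hv

lemma lint_stief_act (he : e ∈ sph d) (u : OG d) {F : E d × E d → ℝ≥0∞} (hF : Measurable F) :
    ∫⁻ y, F (act u y) ∂stief d e = ∫⁻ y, F y ∂stief d e := by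
  have hFu : Measurable fun y => F (act u y) :=
    hF.comp (measurable_act.comp (measurable_const.prodMk measurable_id))
  rw [lint_stief he hFu, lint_stief he hF]
  let g := Unitary.linearIsometryEquiv u
  refine Eq.trans (lintegral_congr fun x => ?_)
    (lint_sph_map g fun x => ∫⁻ v in subsph d x, F (x, v) ∂μH[(d : ℝ) - 2])
  rw [lint_subsph_map]
  rfl

variable [SFinite (sphMeasure d)]

instance : SFinite (stief d e) := by unfold stief; infer_instance

/-- `T_θ` preserves the measure on orthonormal pairs: average over `O(d)`, which commutes with
`T_θ`, and absorb the group element realising `T_θ` by right invariance. -/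
lemma lint_stief_TT (he : e ∈ sph d) (θ : ℝ) {F : E d × E d → ℝ≥0∞} (hF : Measurable F) :
    ∫⁻ y, F (TT θ y) ∂stief d e = ∫⁻ y, F y ∂stief d e := by
  have key : ∀ {F' : E d × E d → ℝ≥0∞}, Measurable F' →
      ∫⁻ y, F' y ∂stief d e = ∫⁻ y, (∫⁻ u, F' (act u y) ∂nu d) ∂stief d e := by
    intro F' hF'
    rw [lintegral_lintegral_swap]
    · simp only [lint_stief_act he _ hF', lintegral_const, measure_univ, mul_one]
    · exact (hF'.comp (measurable_act.comp measurable_swap)).aemeasurable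
  have hm : ∀ {F' : E d × E d → ℝ≥0∞}, Measurable F' →
      Measurable fun y => ∫⁻ u, F' (act u y) ∂nu d := fun hF' =>
    (hF'.comp (measurable_act.comp measurable_swap)).lintegral_prod_right'
  have hFT : Measurable fun y => F (TT θ y) := hF.comp (measurable_TT θ)
  rw [key hFT, key hF]
  refine lint_stief_congr he (hm hFT) (hm hF) fun x v hx hv => ?_
  obtain ⟨w, hw⟩ := exists_act_eq_TT θ hx hv
  simp only [TT_act, ← hw, ← act_mul]
  exact lintegral_mul_right_eq_self (μ := nu d) (fun u => F (act u (x, v))) w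

end Stiefel
/-! ### Level sets along a great circle -/

lemma geo_TT {d : ℕ} (θ φ : ℝ) (y : E d × E d) :
    geo (TT θ y).1 (TT θ y).2 φ = geo y.1 y.2 (θ - φ) := by
  simp only [geo, TT, Tmap, Real.cos_sub, Real.sin_sub]
  module

lemma geo_TT_self {d : ℕ} (θ : ℝ) (y : E d × E d) :
    geo (TT θ y).1 (TT θ y).2 θ = y.1 := by
  rw [geo_TT]; simp [geo]

lemma continuous_geo {d : ℕ} : Continuous fun q : (E d × E d) × ℝ => geo q.1.1 q.1.2 q.2 := by
  unfold geo; fun_prop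

/-- Replacing a periodic set by its image under `φ ↦ θ - φ` does not change the measure of its
trace on a period. -/
lemma volume_periodic_reflect {S : Set ℝ} (hS : MeasurableSet S)
    (hper : ∀ φ, φ + 2 * π ∈ S ↔ φ ∈ S) (θ : ℝ) :
    volume (Set.Ico 0 (2 * π) ∩ (fun φ => θ - φ) ⁻¹' S) = volume (Set.Ico 0 (2 * π) ∩ S) := by
  have hz : ∀ (n : ℤ) φ, φ + n * (2 * π) ∈ S ↔ φ ∈ S := by
    intro n
    have hP : Function.Periodic (fun φ => φ ∈ S) (2 * π) := fun φ => propext (hper φ)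
    intro φ
    exact (hP.int_mul n φ).to_iff
  have h1 : Set.Ico 0 (2 * π) ∩ (fun φ => θ - φ) ⁻¹' S
      = (fun φ => θ - φ) ⁻¹' (S ∩ Set.Ioc (θ - 2 * π) (θ - 2 * π + 2 * π)) := by
    ext φ
    simp only [Set.mem_inter_iff, Set.mem_Ico, Set.mem_preimage, Set.mem_Ioc]
    constructor
    · rintro ⟨⟨h1, h2⟩, h3⟩; exact ⟨h3, by linarith, by linarith⟩
    · rintro ⟨h3, h1, h2⟩; exact ⟨⟨by linarith, by linarith⟩, h3⟩
  have hmp := Measure.measurePreserving_sub_left (volume : Measure ℝ) θ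
  rw [h1, hmp.measure_preimage (hS.inter measurableSet_Ioc).nullMeasurableSet]
  have hinv : ∀ g : AddSubgroup.zmultiples (2 * π), (fun φ : ℝ => g +ᵥ φ) ⁻¹' S = S := by
    rintro ⟨g, hg⟩
    obtain ⟨n, rfl⟩ := AddSubgroup.mem_zmultiples_iff.1 hg
    ext φ
    simp only [Set.mem_preimage, AddSubgroup.vadd_def, vadd_eq_add, zsmul_eq_mul]
    rw [add_comm, hz]
  have hd1 := isAddFundamentalDomain_Ioc two_pi_pos (θ - 2 * π) (volume : Measure ℝ)
  have hd2 := isAddFundamentalDomain_Ioc two_pi_pos 0 (volume : Measure ℝ)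
  rw [hd1.measure_set_eq hd2 hS hinv, zero_add, Set.inter_comm]
  exact measure_congr (Ico_ae_eq_Ioc.symm.inter (ae_eq_refl _))

lemma volume_lvl_TT {d : ℕ} {p : E d → ℝ} (hp : Measurable p) (θ t : ℝ) (y : E d × E d) :
    volume (lvl p (TT θ y).1 (TT θ y).2 t) = volume (lvl p y.1 y.2 t) := by
  have hg : Continuous fun φ => geo y.1 y.2 φ := by unfold geo; fun_prop
  have := volume_periodic_reflect (S := {φ | t < p (geo y.1 y.2 φ)})
    (measurableSet_lt measurable_const (hp.comp hg.measurable))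
    (fun φ => by simp [geo]) θ
  simp only [lvl, geo_TT]
  exact this

lemma measurable_volume_lvl {d : ℕ} {p : E d → ℝ} (hp : Measurable p) :
    Measurable fun q : (E d × E d) × ℝ => volume (lvl p q.1.1 q.1.2 q.2) := by
  have h1 : MeasurableSet {r : ((E d × E d) × ℝ) × ℝ |
      r.2 ∈ Set.Ico 0 (2 * π) ∧ r.1.2 < p (geo r.1.1.1 r.1.1.2 r.2)} := by
    refine (measurable_snd measurableSet_Ico).inter (measurableSet_lt
      (measurable_snd.comp measurable_fst) ?_)
    have : Continuous fun r : ((E d × E d) × ℝ) × ℝ => geo r.1.1.1 r.1.1.2 r.2 := by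
      unfold geo; fun_prop
    exact hp.comp this.measurable
  exact measurable_measure_prodMk_left h1

/-! ### Reversibility as a symmetric integral over orthonormal pairs -/

/-- The indicator of the part of `B` lying in the superlevel set `{p > t}`. -/
def bump {d : ℕ} (p : E d → ℝ) (B : Set (E d)) (t : ℝ) (x : E d) : ℝ≥0∞ :=
  (B ∩ {z | t < p z}).indicator (fun _ => 1) x

lemma measurable_bump {d : ℕ} {p : E d → ℝ} (hp : Measurable p) {B : Set (E d)}
    (hB : MeasurableSet B) : Measurable fun q : ℝ × E d => bump p B q.1 q.2 := by
  have : MeasurableSet {q : ℝ × E d | q.2 ∈ B ∧ q.1 < p q.2} :=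
    (measurable_snd hB).inter (measurableSet_lt measurable_fst (hp.comp measurable_snd))
  exact measurable_const.indicator this

/-- The density, at height `t` and angle `θ`, of moving from `B` to `A` starting from the
orthonormal pair `y`. -/
def flow {d : ℕ} (p : E d → ℝ) (A B : Set (E d)) (t θ : ℝ) (y : E d × E d) : ℝ≥0∞ :=
  bump p B t y.1 * ((volume (lvl p y.1 y.2 t))⁻¹ * bump p A t (geo y.1 y.2 θ))

lemma measurable_flow {d : ℕ} {p : E d → ℝ} (hp : Measurable p) {A B : Set (E d)}
    (hA : MeasurableSet A) (hB : MeasurableSet B) :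
    Measurable fun q : (ℝ × ℝ) × (E d × E d) => flow p A B q.1.1 q.1.2 q.2 := by
  unfold flow
  refine Measurable.mul ?_ (Measurable.mul ?_ ?_)
  · exact (measurable_bump hp hB).comp
      (f := fun q : (ℝ × ℝ) × (E d × E d) => (q.1.1, q.2.1)) (by fun_prop)
  · exact ((measurable_volume_lvl hp).comp
      (f := fun q : (ℝ × ℝ) × (E d × E d) => (q.2, q.1.1)) (by fun_prop)).inv
  · refine (measurable_bump hp hA).comp
      (f := fun q : (ℝ × ℝ) × (E d × E d) => (q.1.1, geo q.2.1 q.2.2 q.1.2)) ?_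
    have : Continuous fun q : (ℝ × ℝ) × (E d × E d) => geo q.2.1 q.2.2 q.1.2 := by
      unfold geo; fun_prop
    exact (by fun_prop : Measurable fun q : (ℝ × ℝ) × (E d × E d) => q.1.1).prodMk this.measurable

/-- `T_θ` exchanges the two end points of a move and keeps its great circle. -/
lemma flow_TT {d : ℕ} {p : E d → ℝ} (hp : Measurable p) (A B : Set (E d)) (t θ : ℝ)
    (y : E d × E d) : flow p A B t θ (TT θ y) = flow p B A t θ y := by
  simp only [flow, volume_lvl_TT hp, geo_TT_self]
  have : (TT θ y).1 = geo y.1 y.2 θ := rfl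
  rw [this]; ring

/-- The weight `p(x)` of the target cancels the factor `1/p(x)` of the kernel; the conditions
`t < p x` and `θ ∈ L(x,v,t)` become indicator factors of `flow`. -/
lemma mul_Hker_eq {d : ℕ} {p : E d → ℝ} (hp : Measurable p) {A B : Set (E d)}
    (hA : MeasurableSet A) {x : E d} (hx : 0 < p x) :
    B.indicator (fun x => ENNReal.ofReal (p x) * Hker p x A) x =
      ∫⁻ t in Set.Ioi 0, (omegaSub d)⁻¹ * ∫⁻ v in subsph d x, (∫⁻ θ in Set.Ico 0 (2 * π),
        flow p A B t θ (x, v)) ∂μH[(d : ℝ) - 2] := by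
  by_cases hxB : x ∈ B
  swap
  · simp [hxB, flow, bump]
  have hIoo : Set.Ioo 0 (p x) = Set.Iio (p x) ∩ Set.Ioi 0 := by
    ext; simp [and_comm]
  rw [Set.indicator_of_mem hxB, Hker, ← mul_assoc, ENNReal.mul_inv_cancel
    (by simpa using hx) ENNReal.ofReal_ne_top, one_mul, hIoo,
    ← setLIntegral_indicator measurableSet_Iio]
  refine lintegral_congr fun t => ?_
  by_cases ht : t < p x
  swap
  · rw [Set.indicator_of_notMem (by simpa using ht)]
    simp [flow, bump, ht]
  rw [Set.indicator_of_mem (by simpa using ht), Hlev]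
  congr 1
  refine lintegral_congr fun v => ?_
  have hg : Measurable fun φ => geo x v φ := by
    have : Continuous fun φ => geo x v φ := by unfold geo; fun_prop
    exact this.measurable
  have hm : Measurable fun θ => bump p A t (geo x v θ) :=
    (measurable_bump hp hA).comp (measurable_const.prodMk hg)
  have h1 : bump p B t x = 1 := by simp [bump, hxB, ht]
  simp only [flow, h1, one_mul]
  rw [lintegral_const_mul _ hm]
  congr 1
  have hl : lvl p x v t = {θ | t < p (geo x v θ)} ∩ Set.Ico 0 (2 * π) := by
    ext θ; simp only [lvl, Set.mem_ofPred_eq, Set.mem_inter_iff]; tauto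
  have hs : MeasurableSet {θ | t < p (geo x v θ)} :=
    measurableSet_lt measurable_const (hp.comp hg)
  rw [hl, ← setLIntegral_indicator hs]
  refine lintegral_congr fun θ => ?_
  by_cases h2 : t < p (geo x v θ) <;> by_cases h3 : geo x v θ ∈ A <;> simp [bump, h2, h3]

/-- The probability flow from `B` to `A`, disintegrated over heights, angles and orthonormal
pairs. -/
lemma lint_Hker_eq {d : ℕ} {e : E d} (he : e ∈ sph d) [SFinite (sphMeasure d)]
    [IsFiniteMeasure ((μH[(d : ℝ) - 2]).restrict (subsph d e))]
    {p : E d → ℝ} (hp : Measurable p) (hpos : ∀ y ∈ sph d, 0 < p y) {A B : Set (E d)}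
    (hA : MeasurableSet A) (hB : MeasurableSet B) :
    ∫⁻ x in B, Hker p x A ∂piMeas d p = (∫⁻ x, ENNReal.ofReal (p x) ∂sphMeasure d)⁻¹ *
      ∫⁻ t in Set.Ioi 0, (omegaSub d)⁻¹ * ∫⁻ θ in Set.Ico 0 (2 * π),
        (∫⁻ y, flow p A B t θ y ∂stief d e) := by
  have hfl := measurable_flow hp hA hB
  have hR := measurable_swapRefl e
  -- Joint measurability in all variables, in the nesting needed for Tonelli.
  have hm4 : Measurable fun q : ((E d × ℝ) × E d) × ℝ =>
      flow p A B q.1.1.2 q.2 (q.1.1.1, swapRefl e q.1.1.1 q.1.2) := by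
    refine hfl.comp (f := fun q : ((E d × ℝ) × E d) × ℝ =>
      ((q.1.1.2, q.2), (q.1.1.1, swapRefl e q.1.1.1 q.1.2))) ?_
    have : Measurable fun q : ((E d × ℝ) × E d) × ℝ => swapRefl e q.1.1.1 q.1.2 :=
      hR.comp (f := fun q : ((E d × ℝ) × E d) × ℝ => (q.1.1.1, q.1.2)) (by fun_prop)
    fun_prop
  have hm2 : Measurable fun q : E d × ℝ => (omegaSub d)⁻¹ * ∫⁻ v in subsph d e,
      (∫⁻ θ in Set.Ico 0 (2 * π), flow p A B q.2 θ (q.1, swapRefl e q.1 v)) ∂μH[(d : ℝ) - 2] :=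
    (hm4.lintegral_prod_right'.lintegral_prod_right').const_mul _
  have hy : ∀ t, Measurable fun q : (E d × E d) × ℝ => flow p A B t q.2 q.1 := fun t =>
    hfl.comp (f := fun q : (E d × E d) × ℝ => ((t, q.2), q.1)) (by fun_prop)
  rw [piMeas, Measure.restrict_smul, lintegral_smul_measure, restrict_withDensity hB,
    lintegral_withDensity_eq_lintegral_mul_non_measurable _ (by fun_prop) (by simp),
    ← lintegral_indicator hB, smul_eq_mul]
  congr 1
  calc _ = ∫⁻ x, (∫⁻ t in Set.Ioi 0, (omegaSub d)⁻¹ * ∫⁻ v in subsph d e,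
        (∫⁻ θ in Set.Ico 0 (2 * π), flow p A B t θ (x, swapRefl e x v)) ∂μH[(d : ℝ) - 2])
        ∂sphMeasure d := by
        refine setLIntegral_congr_fun (measurableSet_sph d) fun x hx => ?_
        refine (mul_Hker_eq hp hA (hpos x hx)).trans (lintegral_congr fun t => ?_)
        have := lint_subsph_map ((d : ℝ) - 2) (swapRefl e x) e fun v =>
          ∫⁻ θ in Set.Ico 0 (2 * π), flow p A B t θ (x, v)
        rw [swapRefl_self he hx] at this
        rw [this]
    _ = ∫⁻ t in Set.Ioi 0, (∫⁻ x, (omegaSub d)⁻¹ * ∫⁻ v in subsph d e,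
        (∫⁻ θ in Set.Ico 0 (2 * π), flow p A B t θ (x, swapRefl e x v)) ∂μH[(d : ℝ) - 2]
        ∂sphMeasure d) := lintegral_lintegral_swap hm2.aemeasurable
    _ = _ := by
        refine lintegral_congr fun t => ?_
        have hmx : Measurable fun x : E d => ∫⁻ v in subsph d e,
            (∫⁻ θ in Set.Ico 0 (2 * π), flow p A B t θ (x, swapRefl e x v)) ∂μH[(d : ℝ) - 2] :=
          hm4.lintegral_prod_right'.lintegral_prod_right'.comp
            (measurable_id.prodMk measurable_const)
        rw [lintegral_const_mul _ hmx,
          ← lintegral_lintegral_swap (μ := stief d e) (hy t).aemeasurable,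
          lint_stief_refl (hy t).lintegral_prod_right']

/-- If `ω_{d-2}` were infinite, the normalising factor `ω_{d-2}⁻¹` would be `0`. Splitting on this
case makes the finiteness of the Hausdorff measure of spheres unnecessary. -/
lemma Hker_of_omega_top {d : ℕ} (h : omegaSub d = ⊤) (p : E d → ℝ) (x : E d) (A : Set (E d)) :
    Hker p x A = 0 := by
  simp [Hker, Hlev, h]

/-- The positive function `p` is integrable for the surface measure, which is therefore s-finite; no
computation of its mass is needed. -/
lemma sFinite_sphMeasure {d : ℕ} {p : E d → ℝ} (hp : Measurable p)
    (hpos : ∀ y ∈ sph d, 0 < p y) (hZtop : ∫⁻ x, ENNReal.ofReal (p x) ∂sphMeasure d < ⊤) :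
    SFinite (sphMeasure d) := by
  have hm : Measurable fun x => ENNReal.ofReal (p x) := by fun_prop
  have h0 : ∀ᵐ x ∂sphMeasure d, ENNReal.ofReal (p x) ≠ 0 :=
    (ae_restrict_mem (measurableSet_sph d)).mono fun x hx => by simpa using hpos x hx
  have := isFiniteMeasure_withDensity hZtop.ne
  rw [← withDensity_inv_same hm h0 (by simp)]
  infer_instance

/-- the ideal geodesic slice sampling kernel `H` is reversible with
respect to `π`. -/
theorem stmt12 {d : ℕ} (hd : 3 ≤ d) (p : E d → ℝ) (hp : Measurable p)
    (hpos : ∀ y ∈ sph d, 0 < p y)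
    (hZ0 : 0 < ∫⁻ x, ENNReal.ofReal (p x) ∂sphMeasure d)
    (hZtop : ∫⁻ x, ENNReal.ofReal (p x) ∂sphMeasure d < ⊤) :
    ∀ A B : Set (E d), MeasurableSet A → MeasurableSet B →
      ∫⁻ x in B, Hker p x A ∂piMeas d p = ∫⁻ x in A, Hker p x B ∂piMeas d p := by
  intro A B hA hB
  by_cases hω : omegaSub d = ⊤
  · simp [Hker_of_omega_top hω]
  let e : E d := EuclideanSpace.single ⟨0, by omega⟩ 1
  have he : e ∈ sph d := by simp [sph, e]
  have := sFinite_sphMeasure hp hpos hZtop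
  have : IsFiniteMeasure ((μH[(d : ℝ) - 2]).restrict (subsph d e)) :=
    ⟨by rw [Measure.restrict_apply_univ, subsph_volume hd he]; exact lt_top_iff_ne_top.2 hω⟩
  rw [lint_Hker_eq he hp hpos hA hB, lint_Hker_eq he hp hpos hB hA]
  congr 1
  refine lintegral_congr fun t => ?_
  congr 1
  refine lintegral_congr fun θ => ?_
  have hm : Measurable (flow p A B t θ) :=
    (measurable_flow hp hA hB).comp (f := fun y => ((t, θ), y)) (by fun_prop)
  rw [← lint_stief_TT he θ hm]
  simp only [flow_TT hp]

end
end
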